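/- Let g = sp_n(R) be the real symplectic Lie algebra acting on I = R^{2n} by the standard representation. Then the algebra of invariants [Λ*(R^{2n})]^{sp_n(R)} equals the exterior subalgebra generated by the symplectic form ω_n = Σ_{i=1}^n (∂/∂x^i) ∧ (∂/∂y^i), i.e., it has basis {1, ω_n, ω_n², ..., ω_nⁿ} (powers taken in Λ*(R^{2n})). -/

import Mathlib

open ExteriorAlgebra

/-! Write `ωᵢ = ∂/∂xⁱ ∧ ∂/∂yⁱ` and `ω_S = ∏_{i ∈ S} ωᵢ`. The diagonal elements
`yᵢ ∂/∂yⁱ - xᵢ ∂/∂xⁱ` act diagonally on the wedge basis, and a basis element has weight zero for all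
of them exactly when it contains `∂/∂xⁱ` if and only if it contains `∂/∂yⁱ`; so every invariant is a
combination of the `ω_S`. For `i ≠ j`, applying `y_j ∂/∂yⁱ - x_i ∂/∂x^j` and then the same element
with `i` and `j` exchanged sends `ω_S` to `ω_S - ω_{(i j) S}`; so the coefficient of `ω_S` in an
invariant depends only on `#S`. Since the `ωᵢ` commute and square to zero,
`ωᵖ = p! ∑_{#S = p} ω_S`, so invariants are combinations of powers of `ω`. Conversely `ω` is killed
by `sp_n` because the off-diagonal blocks of its elements are symmetric. -/

namespace SpExterior

open Module
open scoped Nat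

theorem add_pow_succ_of_sq_eq_zero {A : Type*} [CommSemiring A] {x : A} (hx : x ^ 2 = 0) (y : A)
    (p : ℕ) : (x + y) ^ (p + 1) = y ^ (p + 1) + (p + 1) * x * y ^ p := by
  induction p with
  | zero => simp [add_comm]
  | succ p ih =>
    calc (x + y) ^ (p + 1 + 1)
        = y ^ (p + 1 + 1) + ((p + 1 : ℕ) + 1) * x * y ^ (p + 1) + (p + 1) * x ^ 2 * y ^ p := by
          rw [pow_succ, ih]; push_cast; ring
      _ = y ^ (p + 1 + 1) + ((p + 1 : ℕ) + 1) * x * y ^ (p + 1) := by simp [hx]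

theorem multisetSum_pow_eq_factorial_mul_esymm {A : Type*} [CommSemiring A] (s : Multiset A)
    (hs : ∀ x ∈ s, x ^ 2 = 0) (p : ℕ) : s.sum ^ p = p ! * s.esymm p := by
  induction s using Multiset.induction_on generalizing p with
  | empty => cases p <;> simp [Multiset.esymm, Multiset.powersetCard_zero_right]
  | cons x s ih =>
    rw [Multiset.forall_mem_cons] at hs
    cases p with
    | zero => simp [Multiset.esymm]
    | succ p =>
      have esymm_cons : (x ::ₘ s).esymm (p + 1) = s.esymm (p + 1) + x * s.esymm p := by
        simp [Multiset.esymm, Multiset.powersetCard_cons, Multiset.sum_map_mul_left]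
      rw [Multiset.sum_cons, add_pow_succ_of_sq_eq_zero hs.1, ih hs.2, ih hs.2, esymm_cons,
        Nat.factorial_succ]
      push_cast
      ring

theorem sum_pow_eq_factorial_mul_sum_prod {A ι : Type*} [CommSemiring A] (s : Finset ι) (f : ι → A)
    (hf : ∀ i ∈ s, f i ^ 2 = 0) (p : ℕ) :
    (∑ i ∈ s, f i) ^ p = p ! * ∑ t ∈ s.powersetCard p, ∏ i ∈ t, f i := by
  rw [← Finset.esymm_map_val]
  exact multisetSum_pow_eq_factorial_mul_esymm _ (by simpa using hf) p

theorem linearIndependent_pow_of_pow_succ_eq_zero {R A : Type*} [CommRing R] [Ring A] [Algebra R A]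
    {x : A} {n : ℕ} (hx : x ^ (n + 1) = 0) (hxn : ∀ r : R, r • x ^ n = 0 → r = 0) :
    LinearIndependent R fun p : Fin (n + 1) => x ^ (p : ℕ) := by
  rw [Fintype.linearIndependent_iff]
  intro c hc p
  induction p using WellFoundedLT.induction with
  | ind m ih =>
    have hsum : ∑ p : Fin (n + 1), c p • x ^ (p : ℕ) * x ^ (n - m) =
        c m • x ^ (m : ℕ) * x ^ (n - m) := by
      refine Finset.sum_eq_single_of_mem m (Finset.mem_univ m) fun p _ hp => ?_
      rcases hp.lt_or_gt with hlt | hgt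
      · rw [ih p hlt, zero_smul, zero_mul]
      · rw [smul_mul_assoc, ← pow_add, pow_eq_zero_of_le (by lia) hx, smul_zero]
    rw [← Finset.sum_mul, hc, zero_mul, smul_mul_assoc, ← pow_add,
      Nat.add_sub_of_le (Nat.le_of_lt_succ m.isLt)] at hsum
    exact hxn _ hsum.symm

section ExteriorAlgebra

variable {R M : Type*} [CommRing R] [AddCommGroup M] [Module R M]

theorem ι_mul_ι_swap (v w : M) : ι R v * ι R w = -(ι R w * ι R v) :=
  eq_neg_of_add_eq_zero_left (ι_add_mul_swap v w)

theorem ι_mul_ι_mem_center (v w : M) :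
    ι R v * ι R w ∈ Subalgebra.center R (ExteriorAlgebra R M) := by
  rw [Subalgebra.mem_center_iff]
  intro x
  induction x using ExteriorAlgebra.induction with
  | algebraMap r => exact (Algebra.commutes r _)
  | ι u =>
    calc ι R u * (ι R v * ι R w) = -(ι R v * (ι R u * ι R w)) := by
          rw [← mul_assoc, ι_mul_ι_swap u v, neg_mul, mul_assoc]
      _ = ι R v * ι R w * ι R u := by
          rw [ι_mul_ι_swap u w, mul_neg, neg_neg, mul_assoc]
  | mul a b ha hb => rw [mul_assoc, hb, ← mul_assoc, ha, mul_assoc]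
  | add a b ha hb => rw [mul_add, add_mul, ha, hb]

theorem sum_smul_ι_mul_ι_eq_zero {l : Type*} [Fintype l] {C : Matrix l l R}
    (hC : C.IsSymm) (g : l → M) : ∑ i, ∑ k, C i k • (ι R (g i) * ι R (g k)) = 0 := by
  classical
  rw [← Fintype.sum_prod_type']
  refine Finset.sum_involution (fun q _ => q.swap) ?_ ?_ (by simp) (by simp)
  · rintro ⟨i, k⟩ -
    simp only [Prod.fst_swap, Prod.snd_swap]
    rw [hC.apply, ← smul_add, ι_add_mul_swap, smul_zero]
  · rintro ⟨i, k⟩ - h hq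
    obtain rfl : k = i := congrArg Prod.fst hq
    simp at h

/-- `D` is a derivation of the exterior algebra whose restriction to vectors is `T`. -/
structure IsDerivationExtending (T : M →ₗ[R] M)
    (D : ExteriorAlgebra R M →ₗ[R] ExteriorAlgebra R M) : Prop where
  leibniz (a b : ExteriorAlgebra R M) : D (a * b) = D a * b + a * D b
  map_ι (v : M) : D (ι R v) = ι R (T v)

namespace IsDerivationExtending

variable {T : M →ₗ[R] M} {D : ExteriorAlgebra R M →ₗ[R] ExteriorAlgebra R M}

theorem map_one (h : IsDerivationExtending T D) : D 1 = 0 := by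
  simpa using h.leibniz 1 1

theorem map_pow_eq_zero (h : IsDerivationExtending T D) {a : ExteriorAlgebra R M} (ha : D a = 0)
    (p : ℕ) : D (a ^ p) = 0 := by
  induction p with
  | zero => rw [pow_zero, h.map_one]
  | succ p ih => rw [pow_succ, h.leibniz, ih, ha, zero_mul, mul_zero, add_zero]

end IsDerivationExtending

/-- The basis of the exterior algebra formed by the wedge products of the vectors of `b`, taken in
the order given by some arbitrary well-ordering of the index type; its elements are therefore only
meaningful up to sign. -/
noncomputable def wedgeBasis {I : Type*} (b : Basis I R M) :
    Basis (Finset I) R (ExteriorAlgebra R M) :=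
  letI : LinearOrder I := IsWellOrder.linearOrder WellOrderingRel
  b.ExteriorAlgebra

variable {I : Type*} (b : Basis I R M)

theorem basis_empty [LinearOrder I] : b.ExteriorAlgebra ∅ = 1 := by
  rw [ExteriorAlgebra.basis_apply_ofCard (n := 0) b Finset.card_empty]
  simp [ιMulti_family]

theorem basis_singleton [LinearOrder I] (i : I) : b.ExteriorAlgebra {i} = ι R (b i) := by
  rw [ExteriorAlgebra.basis_apply_ofCard (n := 1) b (Finset.card_singleton i)]
  simp [ιMulti_family, ιMulti_apply, Set.powersetCard.ofFinEmbEquiv]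

theorem wedgeBasis_empty : wedgeBasis b ∅ = 1 := by
  let : LinearOrder I := IsWellOrder.linearOrder WellOrderingRel
  exact basis_empty b

theorem exists_wedgeBasis_cons_eq_smul {i : I} {s : Finset I} (hi : i ∉ s) :
    ∃ ε : ℤˣ, wedgeBasis b (s.cons i hi) = ε • (ι R (b i) * wedgeBasis b s) := by
  let : LinearOrder I := IsWellOrder.linearOrder WellOrderingRel
  let single : Set.powersetCard I 1 := ⟨{i}, Finset.card_singleton i⟩
  let rest : Set.powersetCard I s.card := ⟨s, rfl⟩
  have hdisj : Disjoint single.val rest.val := Finset.disjoint_singleton_left.mpr hi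
  have hcons : (Set.powersetCard.disjUnion hdisj : Finset I) = s.cons i hi :=
    Finset.singleton_disjUnion (h := hdisj) ..
  refine ⟨(Set.powersetCard.permOfDisjoint hdisj).sign⁻¹, ?_⟩
  rw [eq_inv_smul_iff, ← basis_singleton, ← hcons]
  exact (basis_mul_of_disjoint b single rest hdisj).symm

namespace IsDerivationExtending

variable {T : M →ₗ[R] M} {D : ExteriorAlgebra R M →ₗ[R] ExteriorAlgebra R M} {b} {d : I → R}

theorem map_wedgeBasis (h : IsDerivationExtending T D) (hd : ∀ i, T (b i) = d i • b i)
    (s : Finset I) : D (wedgeBasis b s) = (∑ i ∈ s, d i) • wedgeBasis b s := by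
  induction s using Finset.cons_induction with
  | empty => rw [wedgeBasis_empty, h.map_one, Finset.sum_empty, zero_smul]
  | cons i s hi ih =>
    obtain ⟨ε, hε⟩ := exists_wedgeBasis_cons_eq_smul b hi
    rw [hε, Units.smul_def, map_zsmul, h.leibniz, h.map_ι, hd, ih, Finset.sum_cons, map_smul,
      smul_mul_assoc, mul_smul_comm, ← add_smul, smul_comm]

theorem repr_map (h : IsDerivationExtending T D) (hd : ∀ i, T (b i) = d i • b i)
    (a : ExteriorAlgebra R M) (s : Finset I) :
    (wedgeBasis b).repr (D a) s = (∑ i ∈ s, d i) * (wedgeBasis b).repr a s := by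
  suffices (wedgeBasis b).coord s ∘ₗ D = (∑ i ∈ s, d i) • (wedgeBasis b).coord s from
    LinearMap.congr_fun this a
  refine (wedgeBasis b).ext fun t => ?_
  by_cases hts : t = s <;> simp [h.map_wedgeBasis hd, hts]

end IsDerivationExtending

end ExteriorAlgebra

section SymplecticForm

variable (R : Type*) {l : Type*} [CommRing R] [DecidableEq l]

/-- The vector `∂/∂xⁱ` in the exterior algebra. -/
noncomputable def partialX (i : l) : ExteriorAlgebra R (l ⊕ l → R) :=
  ι R (Pi.single (Sum.inl i) 1)

/-- The vector `∂/∂yⁱ` in the exterior algebra. -/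
noncomputable def partialY (i : l) : ExteriorAlgebra R (l ⊕ l → R) :=
  ι R (Pi.single (Sum.inr i) 1)

theorem partialX_sq (i : l) : partialX R i * partialX R i = 0 := ι_sq_zero _

theorem partialY_sq (i : l) : partialY R i * partialY R i = 0 := ι_sq_zero _

/-- The bivector `ωᵢ = ∂/∂xⁱ ∧ ∂/∂yⁱ`, as an element of the centre of the exterior algebra: the
centre being commutative, `Finset.prod` applies there. -/
noncomputable def pairForm (i : l) : Subalgebra.center R (ExteriorAlgebra R (l ⊕ l → R)) :=
  ⟨partialX R i * partialY R i, ι_mul_ι_mem_center _ _⟩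

theorem coe_pairForm (i : l) :
    (pairForm R i : ExteriorAlgebra R (l ⊕ l → R)) = partialX R i * partialY R i := rfl

theorem pairForm_eq_neg (i : l) :
    (pairForm R i : ExteriorAlgebra R (l ⊕ l → R)) = -(partialY R i * partialX R i) :=
  ι_mul_ι_swap _ _

theorem partialX_mul_pairForm (i : l) : partialX R i * pairForm R i = 0 := by
  rw [coe_pairForm, ← mul_assoc, partialX_sq, zero_mul]

theorem partialY_mul_pairForm (i : l) : partialY R i * pairForm R i = 0 := by
  rw [pairForm_eq_neg, mul_neg, ← mul_assoc, partialY_sq, zero_mul, neg_zero]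

theorem pairForm_sq (i : l) : pairForm R i ^ 2 = 0 := by
  apply Subtype.ext
  rw [Subalgebra.coe_pow, sq]
  nth_rw 1 [pairForm_eq_neg]
  rw [neg_mul, mul_assoc, partialX_mul_pairForm, mul_zero, neg_zero, Subalgebra.coe_zero]

/-- The product `ω_S` of the bivectors `ωᵢ` over `i ∈ S`. -/
noncomputable def pairProd (S : Finset l) : ExteriorAlgebra R (l ⊕ l → R) :=
  (∏ i ∈ S, pairForm R i : Subalgebra.center R (ExteriorAlgebra R (l ⊕ l → R)))

theorem pairProd_empty : pairProd R (∅ : Finset l) = 1 := by simp [pairProd]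

variable {i : l} {S : Finset l}

theorem pairProd_insert (hi : i ∉ S) :
    pairProd R (insert i S) = pairForm R i * pairProd R S := by
  rw [pairProd, Finset.prod_insert hi, Subalgebra.coe_mul, pairProd]

theorem pairForm_mul_pairProd_erase (hi : i ∈ S) :
    pairForm R i * pairProd R (S.erase i) = pairProd R S := by
  rw [← pairProd_insert R (Finset.notMem_erase i S), Finset.insert_erase hi]

theorem partialX_mul_pairProd (hi : i ∈ S) : partialX R i * pairProd R S = 0 := by
  rw [← pairForm_mul_pairProd_erase R hi, ← mul_assoc, partialX_mul_pairForm, zero_mul]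

theorem partialY_mul_pairProd (hi : i ∈ S) : partialY R i * pairProd R S = 0 := by
  rw [← pairForm_mul_pairProd_erase R hi, ← mul_assoc, partialY_mul_pairForm, zero_mul]

theorem exists_pairProd_eq_smul_wedgeBasis [Finite l] (S : Finset l) :
    ∃ ε : ℤˣ, pairProd R S = ε • wedgeBasis (Pi.basisFun R (l ⊕ l)) (S.disjSum S) := by
  induction S using Finset.induction_on with
  | empty => exact ⟨1, by simp [pairProd_empty, wedgeBasis_empty]⟩
  | insert i S hi ih =>
    have hr : Sum.inr i ∉ S.disjSum S := by simpa
    have hl : Sum.inl i ∉ (S.disjSum S).cons (Sum.inr i) hr := by simpa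
    have hcons : (insert i S).disjSum (insert i S) =
        ((S.disjSum S).cons (Sum.inr i) hr).cons (Sum.inl i) hl := by
      ext (k | k) <;> simp
    obtain ⟨ε, hε⟩ := ih
    obtain ⟨εr, hεr⟩ := exists_wedgeBasis_cons_eq_smul (Pi.basisFun R (l ⊕ l)) hr
    obtain ⟨εl, hεl⟩ := exists_wedgeBasis_cons_eq_smul (Pi.basisFun R (l ⊕ l)) hl
    refine ⟨ε * εr⁻¹ * εl⁻¹, ?_⟩
    rw [hcons, hεl, hεr, pairProd_insert R hi, hε, coe_pairForm, partialX, partialY]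
    simp only [Pi.basisFun_apply, mul_smul_comm, mul_assoc, mul_smul, inv_smul_smul]

theorem linearIndependent_pairProd [Finite l] :
    LinearIndependent R (pairProd R : Finset l → ExteriorAlgebra R (l ⊕ l → R)) := by
  choose ε hε using exists_pairProd_eq_smul_wedgeBasis R (l := l)
  have hinj : Function.Injective fun S : Finset l => S.disjSum S := fun S T h =>
    (Finset.disjSum_inj.mp h).1
  rw [funext hε]
  exact ((wedgeBasis (Pi.basisFun R (l ⊕ l))).linearIndependent.comp _ hinj).group_smul ε

variable {R} in
theorem IsDerivationExtending.map_pairProd {T : (l ⊕ l → R) →ₗ[R] l ⊕ l → R}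
    {D : ExteriorAlgebra R (l ⊕ l → R) →ₗ[R] ExteriorAlgebra R (l ⊕ l → R)}
    (h : IsDerivationExtending T D) (S : Finset l) :
    D (pairProd R S) = ∑ k ∈ S, D (pairForm R k) * pairProd R (S.erase k) := by
  induction S using Finset.induction_on with
  | empty => rw [pairProd_empty, h.map_one, Finset.sum_empty]
  | insert i S hi ih =>
    have hcomm (x : ExteriorAlgebra R (l ⊕ l → R)) : pairForm R i * x = x * pairForm R i :=
      (Subalgebra.mem_center_iff.mp (pairForm R i).2 x).symm
    rw [pairProd_insert R hi, h.leibniz, ih, Finset.sum_insert hi, Finset.erase_insert hi,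
      Finset.mul_sum]
    refine congrArg _ (Finset.sum_congr rfl fun k hk => ?_)
    have hik : i ≠ k := fun hik => hi (hik ▸ hk)
    rw [← mul_assoc, hcomm, mul_assoc, Finset.erase_insert_of_ne hik,
      pairProd_insert R fun hmem => hi (Finset.mem_of_mem_erase hmem)]

section Fintype

variable [Fintype l]

variable (l) in
/-- The symplectic form `ω = ∑ᵢ ∂/∂xⁱ ∧ ∂/∂yⁱ`, viewed as a bivector. -/
noncomputable def symplecticForm : ExteriorAlgebra R (l ⊕ l → R) :=
  ∑ i : l, partialX R i * partialY R i

theorem symplecticForm_eq_coe_sum_pairForm : symplecticForm R l =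
    (∑ i : l, pairForm R i : Subalgebra.center R (ExteriorAlgebra R (l ⊕ l → R))) := by
  rw [AddSubmonoidClass.coe_finsetSum]
  rfl

theorem symplecticForm_pow (p : ℕ) : symplecticForm R l ^ p =
    (p ! : R) • ∑ S ∈ Finset.univ.powersetCard p, pairProd R S := by
  rw [symplecticForm_eq_coe_sum_pairForm, ← Subalgebra.coe_pow,
    sum_pow_eq_factorial_mul_sum_prod _ _ fun i _ => pairForm_sq R i, Nat.cast_smul_eq_nsmul,
    nsmul_eq_mul]
  simp only [pairProd, Subalgebra.coe_mul, AddSubmonoidClass.coe_finsetSum]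
  rfl

theorem symplecticForm_pow_card : symplecticForm R l ^ Fintype.card l =
    ((Fintype.card l)! : R) • pairProd R Finset.univ := by
  rw [symplecticForm_pow, ← Finset.card_univ, Finset.powersetCard_self, Finset.sum_singleton]

theorem symplecticForm_pow_card_succ : symplecticForm R l ^ (Fintype.card l + 1) = 0 := by
  rw [symplecticForm_pow, Finset.powersetCard_eq_empty.mpr (by simp), Finset.sum_empty, smul_zero]

variable {R} in
theorem linearIndependent_symplecticForm_pow (hl : ((Fintype.card l)! : R) ∈ nonZeroDivisors R) :
    LinearIndependent R fun p : Fin (Fintype.card l + 1) => symplecticForm R l ^ (p : ℕ) := by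
  refine linearIndependent_pow_of_pow_succ_eq_zero (symplecticForm_pow_card_succ R) fun r hr => ?_
  rw [symplecticForm_pow_card, smul_smul] at hr
  have hr' : r * ((Fintype.card l)! : R) = 0 := Finsupp.single_eq_zero.mp <|
    linearIndependent_iff.mp (linearIndependent_pairProd R) (Finsupp.single Finset.univ _)
      (by rwa [Finsupp.linearCombination_single])
  exact (mem_nonZeroDivisors_iff_right.mp hl) r hr'

end Fintype

end SymplecticForm

section Swap

open scoped Pointwise

variable {l : Type*} [DecidableEq l] {i j : l} {S : Finset l}

theorem swap_smul_finset_of_mem_iff (h : i ∈ S ↔ j ∈ S) : Equiv.swap i j • S = S := by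
  ext k
  rw [← Finset.inv_smul_mem_iff, Equiv.swap_inv, Equiv.Perm.smul_def, Equiv.swap_apply_def]
  split_ifs <;> simp_all

theorem swap_smul_finset_of_mem_of_notMem (hi : i ∈ S) (hj : j ∉ S) :
    Equiv.swap i j • S = insert j (S.erase i) := by
  ext k
  rw [← Finset.inv_smul_mem_iff, Equiv.swap_inv, Equiv.Perm.smul_def, Equiv.swap_apply_def]
  split_ifs with hki hkj
  · subst hki
    simp [hj, ne_of_mem_of_not_mem hi hj]
  · simp [hkj, hi]
  · simp [hki, hkj]

theorem exists_eq_comp_card [Finite l] {α : Type*} {c : Finset l → α}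
    (hc : ∀ (i j : l) (S : Finset l), c (Equiv.swap i j • S) = c S) :
    ∃ b : ℕ → α, c = b ∘ Finset.card := by
  have hperm (σ : Equiv.Perm l) (S : Finset l) : c (σ • S) = c S := by
    induction σ using Equiv.Perm.swap_induction_on generalizing S with
    | one => rw [one_smul]
    | swap_mul σ i j _ ih => rw [mul_smul, hc, ih]
  have : Nonempty α := ⟨c ∅⟩
  refine (Function.factorsThrough_iff c).mp fun S T hST => ?_
  have := Set.powersetCard.isPretransitive (α := l) (n := T.card)
  let S' : Set.powersetCard l T.card := ⟨S, hST⟩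
  obtain ⟨σ, hσ⟩ := MulAction.exists_smul_eq (Equiv.Perm l) S' ⟨T, rfl⟩
  rw [← hperm σ S]
  exact congrArg c (congrArg Subtype.val hσ)

end Swap

section SymplecticAlgebra

open Matrix

variable {R l : Type*} [CommRing R] [DecidableEq l]

variable (R) in
/-- The matrix of `y_j ∂/∂yⁱ - x_i ∂/∂x^j`, which sends `∂/∂xⁱ` to `∂/∂x^j`, `∂/∂y^j` to `-∂/∂yⁱ`
and all other basis vectors to zero. -/
def mixedGenerator (i j : l) : Matrix (l ⊕ l) (l ⊕ l) R :=
  fromBlocks (single j i 1) 0 0 (-single i j 1)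

variable (R) in
/-- The eigenvalues of the diagonal matrix `mixedGenerator R i i` on the standard basis. -/
def torusWeight (i : l) : l ⊕ l → R :=
  Sum.elim (Pi.single i 1) (-Pi.single i 1)

theorem sum_torusWeight (i : l) (s : Finset (l ⊕ l)) : ∑ k ∈ s, torusWeight R i k =
    (if i ∈ s.toLeft then 1 else 0) - if i ∈ s.toRight then 1 else 0 := by
  conv_lhs => rw [← s.toLeft_disjSum_toRight, Finset.sum_disjSum]
  simp [torusWeight, sub_eq_add_neg]

variable [Fintype l]

theorem fromBlocks_mem_sp_iff {A B C D : Matrix l l R} :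
    fromBlocks A B C D ∈ LieAlgebra.Symplectic.sp l R ↔ D = -Aᵀ ∧ B.IsSymm ∧ C.IsSymm := by
  rw [LieAlgebra.Symplectic.sp, mem_skewAdjointMatricesLieSubalgebra,
    mem_skewAdjointMatricesSubmodule, Matrix.IsSkewAdjoint, Matrix.IsAdjointPair, Matrix.J,
    fromBlocks_transpose, fromBlocks_neg, fromBlocks_multiply, fromBlocks_multiply,
    fromBlocks_inj]
  simp only [Matrix.mul_zero, Matrix.mul_one, zero_add, add_zero, Matrix.mul_neg, Matrix.zero_mul,
    Matrix.neg_mul, Matrix.one_mul, neg_neg, neg_zero, neg_inj, IsSymm]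
  constructor
  · rintro ⟨hC, rfl, -, hB⟩
    exact ⟨rfl, hB, hC⟩
  · rintro ⟨rfl, hB, hC⟩
    exact ⟨hC, rfl, by rw [transpose_neg, transpose_transpose], hB⟩

theorem mixedGenerator_mem_sp (i j : l) :
    mixedGenerator R i j ∈ LieAlgebra.Symplectic.sp l R := by
  rw [mixedGenerator, fromBlocks_mem_sp_iff, transpose_single]
  exact ⟨rfl, transpose_zero, transpose_zero⟩

theorem mixedGenerator_self_mulVec_single (i : l) (k : l ⊕ l) :
    mixedGenerator R i i *ᵥ Pi.single k 1 = torusWeight R i k • Pi.single k 1 := by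
  rw [mixedGenerator, mulVec_single_one]
  ext m
  rcases k with k | k <;> rcases m with m | m <;>
    simp [torusWeight, single_apply, Pi.single_apply] <;> grind

namespace IsDerivationExtending

variable {D : ExteriorAlgebra R (l ⊕ l → R) →ₗ[R] ExteriorAlgebra R (l ⊕ l → R)}

section Blocks

variable {P Q U V : Matrix l l R}

theorem map_partialX (h : IsDerivationExtending (fromBlocks P Q U V).mulVecLin D) (i : l) :
    D (partialX R i) = ∑ k, P k i • partialX R k + ∑ k, U k i • partialY R k := by
  rw [partialX, h.map_ι, pi_eq_sum_univ' (mulVecLin _ _), Fintype.sum_sum_type]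
  simp [map_sum, partialX, partialY]

theorem map_partialY (h : IsDerivationExtending (fromBlocks P Q U V).mulVecLin D) (i : l) :
    D (partialY R i) = ∑ k, Q k i • partialX R k + ∑ k, V k i • partialY R k := by
  rw [partialY, h.map_ι, pi_eq_sum_univ' (mulVecLin _ _), Fintype.sum_sum_type]
  simp [map_sum, partialX, partialY]

end Blocks

theorem map_symplecticForm {X : Matrix (l ⊕ l) (l ⊕ l) R} (hX : X ∈ LieAlgebra.Symplectic.sp l R)
    (h : IsDerivationExtending X.mulVecLin D) : D (symplecticForm R l) = 0 := by
  obtain ⟨P, Q, U, V, rfl⟩ : ∃ P Q U V, X = fromBlocks P Q U V :=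
    ⟨_, _, _, _, (fromBlocks_toBlocks X).symm⟩
  obtain ⟨rfl, hQ, hU⟩ := fromBlocks_mem_sp_iff.mp hX
  have hQ' : ∑ i, ∑ k, Q k i • (partialX R i * partialX R k) = 0 := by
    simp only [← hQ.apply]
    exact sum_smul_ι_mul_ι_eq_zero hQ fun i => Pi.single (Sum.inl i) 1
  have hU' : ∑ i, ∑ k, U k i • (partialY R k * partialY R i) = 0 := by
    rw [Finset.sum_comm]
    exact sum_smul_ι_mul_ι_eq_zero hU fun i => Pi.single (Sum.inr i) 1
  have hP : ∑ i, ∑ k, P k i • (partialX R k * partialY R i) =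
      ∑ i, ∑ k, P i k • (partialX R i * partialY R k) := Finset.sum_comm
  simp only [symplecticForm, map_sum, h.leibniz, h.map_partialX, h.map_partialY, add_mul, mul_add,
    Finset.sum_mul, Finset.mul_sum, smul_mul_assoc, mul_smul_comm, Finset.sum_add_distrib, hQ',
    hU', hP, Matrix.neg_apply, transpose_apply, neg_smul, mul_neg, Finset.sum_neg_distrib, add_zero,
    zero_add, add_neg_cancel]

variable {i j : l} (h : IsDerivationExtending (mixedGenerator R i j).mulVecLin D)

include h

theorem map_partialX_mixed (k : l) :
    D (partialX R k) = if k = i then partialX R j else 0 := by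
  rw [IsDerivationExtending.map_partialX h]
  rcases eq_or_ne k i with rfl | hk
  · simp [single_apply]
  · simp [hk, hk.symm]

theorem map_partialY_mixed (k : l) :
    D (partialY R k) = if k = j then -partialY R i else 0 := by
  rw [IsDerivationExtending.map_partialY h]
  rcases eq_or_ne k j with rfl | hk
  · simp [single_apply]
  · simp [hk, hk.symm]

theorem map_pairForm_mixed (k : l) : D (pairForm R k) =
    (if k = i then partialX R j * partialY R i else 0) -
      if k = j then partialX R j * partialY R i else 0 := by
  rw [coe_pairForm, h.leibniz, h.map_partialX_mixed, h.map_partialY_mixed]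
  split_ifs with hi hj <;> simp_all

theorem map_pairProd_mixed (S : Finset l) : D (pairProd R S) =
    (if i ∈ S then partialX R j * partialY R i * pairProd R (S.erase i) else 0) -
      if j ∈ S then partialX R j * partialY R i * pairProd R (S.erase j) else 0 := by
  simp only [h.map_pairProd, h.map_pairForm_mixed, sub_mul, ite_mul, zero_mul,
    Finset.sum_sub_distrib, Finset.sum_ite_eq']

theorem map_partialX_mul_partialY_mul_pairProd_mixed {S : Finset l} (hi : i ∉ S) (hj : j ∉ S) :
    D (partialX R i * partialY R j * pairProd R S) =
      pairProd R (insert j S) - pairProd R (insert i S) := by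
  rw [h.leibniz, h.leibniz, h.map_partialX_mixed, h.map_partialY_mixed, h.map_pairProd_mixed,
    pairProd_insert R hi, pairProd_insert R hj, coe_pairForm, coe_pairForm, if_pos rfl, if_pos rfl,
    if_neg hi, if_neg hj, sub_self, mul_zero, add_zero, add_mul, mul_neg, neg_mul, sub_eq_add_neg]

open scoped Pointwise in
theorem map_map_pairProd_mixed
    {D' : ExteriorAlgebra R (l ⊕ l → R) →ₗ[R] ExteriorAlgebra R (l ⊕ l → R)}
    (h' : IsDerivationExtending (mixedGenerator R j i).mulVecLin D') (hij : i ≠ j) (S : Finset l) :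
    D' (D (pairProd R S)) = pairProd R S - pairProd R (Equiv.swap i j • S) := by
  rw [h.map_pairProd_mixed]
  by_cases hi : i ∈ S <;> by_cases hj : j ∈ S
  · have hXY : partialX R j * partialY R i = -(partialY R i * partialX R j) := ι_mul_ι_swap _ _
    rw [if_pos hi, if_pos hj, swap_smul_finset_of_mem_iff (iff_of_true hi hj), sub_self, mul_assoc,
      mul_assoc, partialY_mul_pairProd R (Finset.mem_erase.mpr ⟨hij, hi⟩), ← mul_assoc, hXY,
      neg_mul, mul_assoc, partialX_mul_pairProd R (Finset.mem_erase.mpr ⟨hij.symm, hj⟩)]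
    simp only [mul_zero, neg_zero, sub_zero, map_zero]
  · rw [if_pos hi, if_neg hj, sub_zero, h'.map_partialX_mul_partialY_mul_pairProd_mixed
      (fun hmem => hj (Finset.mem_of_mem_erase hmem)) (Finset.notMem_erase i S),
      Finset.insert_erase hi, swap_smul_finset_of_mem_of_notMem hi hj]
  · rw [if_neg hi, if_pos hj, zero_sub, map_neg, h'.map_partialX_mul_partialY_mul_pairProd_mixed
      (Finset.notMem_erase j S) (fun hmem => hi (Finset.mem_of_mem_erase hmem)),
      Finset.insert_erase hj, Equiv.swap_comm, swap_smul_finset_of_mem_of_notMem hj hi, neg_sub]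
  · rw [if_neg hi, if_neg hj, swap_smul_finset_of_mem_iff (iff_of_false hi hj), sub_self, map_zero,
      sub_self]

end IsDerivationExtending

section Invariants

variable {a : ExteriorAlgebra R (l ⊕ l → R)}

theorem repr_eq_zero_of_map_eq_zero {i : l}
    {D : ExteriorAlgebra R (l ⊕ l → R) →ₗ[R] ExteriorAlgebra R (l ⊕ l → R)}
    (h : IsDerivationExtending (mixedGenerator R i i).mulVecLin D) (ha : D a = 0)
    {s : Finset (l ⊕ l)} (hs : ¬(i ∈ s.toLeft ↔ i ∈ s.toRight)) :
    (wedgeBasis (Pi.basisFun R (l ⊕ l))).repr a s = 0 := by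
  have hd (k : l ⊕ l) : (mixedGenerator R i i).mulVecLin (Pi.basisFun R (l ⊕ l) k) =
      torusWeight R i k • Pi.basisFun R (l ⊕ l) k := by
    rw [mulVecLin_apply, Pi.basisFun_apply, mixedGenerator_self_mulVec_single]
  have hweight := h.repr_map hd a s
  rw [ha, map_zero, Finsupp.zero_apply, sum_torusWeight] at hweight
  by_cases hi : i ∈ s.toLeft <;> by_cases hi' : i ∈ s.toRight <;> simp_all

theorem mem_span_range_pairProd
    {D : l → ExteriorAlgebra R (l ⊕ l → R) →ₗ[R] ExteriorAlgebra R (l ⊕ l → R)}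
    (h : ∀ i, IsDerivationExtending (mixedGenerator R i i).mulVecLin (D i))
    (ha : ∀ i, D i a = 0) : a ∈ Submodule.span R (Set.range (pairProd R (l := l))) := by
  rw [← (wedgeBasis (Pi.basisFun R (l ⊕ l))).sum_repr a]
  refine Submodule.sum_mem _ fun s _ => ?_
  by_cases hs : s.toLeft = s.toRight
  · obtain ⟨ε, hε⟩ := exists_pairProd_eq_smul_wedgeBasis R s.toLeft
    have hdisj : s.toLeft.disjSum s.toLeft = s := Finset.disjSum_eq_iff.mpr ⟨rfl, hs⟩
    rw [hdisj, ← inv_smul_eq_iff] at hε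
    rw [← hε, Units.smul_def]
    exact Submodule.smul_mem _ _ <| zsmul_mem (Submodule.subset_span (Set.mem_range_self _)) _
  · obtain ⟨i, hi⟩ : ∃ i, ¬(i ∈ s.toLeft ↔ i ∈ s.toRight) := by
      by_contra! hall
      exact hs (Finset.ext hall)
    rw [repr_eq_zero_of_map_eq_zero (h i) (ha i) hi, zero_smul]
    exact Submodule.zero_mem _

variable {D : l → l → ExteriorAlgebra R (l ⊕ l → R) →ₗ[R] ExteriorAlgebra R (l ⊕ l → R)}

open scoped Pointwise in
theorem coeff_swap_smul (h : ∀ i j, IsDerivationExtending (mixedGenerator R i j).mulVecLin (D i j))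
    {c : Finset l → R} {i j : l} (hc : D i j (∑ S, c S • pairProd R S) = 0) (S : Finset l) :
    c (Equiv.swap i j • S) = c S := by
  rcases eq_or_ne i j with rfl | hij
  · rw [Equiv.swap_self, ← Equiv.Perm.one_def, one_smul]
  have hreindex : ∑ S, c S • pairProd R (Equiv.swap i j • S) =
      ∑ S, c (Equiv.swap i j • S) • pairProd R S := by
    rw [← Equiv.sum_comp (MulAction.toPerm (Equiv.swap i j))]
    simp only [MulAction.toPerm_apply, smul_smul, Equiv.swap_mul_self, one_smul]
  have hsum : ∑ S, (c S - c (Equiv.swap i j • S)) • pairProd R S = 0 :=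
    calc ∑ S, (c S - c (Equiv.swap i j • S)) • pairProd R S
        = ∑ S, c S • (pairProd R S - pairProd R (Equiv.swap i j • S)) := by
          simp only [sub_smul, smul_sub, Finset.sum_sub_distrib, hreindex]
      _ = D j i (D i j (∑ S, c S • pairProd R S)) := by
          simp only [map_sum, map_smul, (h i j).map_map_pairProd_mixed (h j i) hij]
      _ = 0 := by rw [hc, map_zero]
  have := Fintype.linearIndependent_iff.mp (linearIndependent_pairProd R) _ hsum S
  exact (sub_eq_zero.mp this).symm

theorem mem_span_symplecticForm_pow (hl : IsUnit ((Fintype.card l)! : R))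
    (h : ∀ i j, IsDerivationExtending (mixedGenerator R i j).mulVecLin (D i j))
    (ha : ∀ i j, D i j a = 0) :
    a ∈ Submodule.span R
      (Set.range fun p : Fin (Fintype.card l + 1) => symplecticForm R l ^ (p : ℕ)) := by
  obtain ⟨c, rfl⟩ := (Submodule.mem_span_range_iff_exists_fun R).mp
    (mem_span_range_pairProd (fun i => h i i) fun i => ha i i)
  obtain ⟨b, rfl⟩ := exists_eq_comp_card fun i j S => coeff_swap_smul h (ha i j) S
  have hsum : ∑ S : Finset l, (b ∘ Finset.card) S • pairProd R S =
      ∑ p ∈ Finset.range (Fintype.card l + 1),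
        b p • ∑ S ∈ Finset.univ.powersetCard p, pairProd R S := by
    rw [← Finset.powerset_univ, Finset.sum_powerset, Finset.card_univ]
    refine Finset.sum_congr rfl fun p _ => ?_
    rw [Finset.smul_sum]
    exact Finset.sum_congr rfl fun S hS => by
      rw [Function.comp_apply, (Finset.mem_powersetCard.mp hS).2]
  rw [hsum]
  refine Submodule.sum_mem _ fun p hp => Submodule.smul_mem _ _ ?_
  rw [Finset.mem_range] at hp
  have hunit : IsUnit (p ! : R) :=
    isUnit_of_dvd_unit (Nat.cast_dvd_cast (Nat.factorial_dvd_factorial (Nat.le_of_lt_succ hp))) hl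
  rw [← Submodule.smul_mem_iff_of_isUnit _ hunit, ← symplecticForm_pow]
  exact Submodule.subset_span ⟨⟨p, hp⟩, rfl⟩

end Invariants

end SymplecticAlgebra

end SpExterior

open SpExterior in
theorem sp_n_exterior_invariants_general {R l : Type*} [CommRing R] [Fintype l] [DecidableEq l]
    {n : ℕ} (hl : Fintype.card l = n) (hn : IsUnit (n.factorial : R))
    (θ : Matrix (l ⊕ l) (l ⊕ l) R →
      (ExteriorAlgebra R (l ⊕ l → R) →ₗ[R] ExteriorAlgebra R (l ⊕ l → R)))
    (hθ : ∀ X ∈ LieAlgebra.Symplectic.sp l R, IsDerivationExtending X.mulVecLin (θ X)) :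
    (∀ a : ExteriorAlgebra R (l ⊕ l → R),
      (∀ X ∈ LieAlgebra.Symplectic.sp l R, θ X a = 0) ↔
        a ∈ Submodule.span R (Set.range fun p : Fin (n + 1) => symplecticForm R l ^ (p : ℕ))) ∧
    LinearIndependent R fun p : Fin (n + 1) => symplecticForm R l ^ (p : ℕ) := by
  subst hl
  refine ⟨fun a => ⟨fun ha => ?_, fun ha X hX => ?_⟩,
    linearIndependent_symplecticForm_pow hn.mem_nonZeroDivisors⟩
  · exact mem_span_symplecticForm_pow hn (fun i j => hθ _ (mixedGenerator_mem_sp i j))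
      fun i j => ha _ (mixedGenerator_mem_sp i j)
  · have hker : Submodule.span R (Set.range fun p : Fin (Fintype.card l + 1) =>
        symplecticForm R l ^ (p : ℕ)) ≤ LinearMap.ker (θ X) := by
      rw [Submodule.span_le]
      rintro _ ⟨p, rfl⟩
      exact (hθ X hX).map_pow_eq_zero ((hθ X hX).map_symplecticForm hX) p
    exact hker ha

/-- for `g = sp_n(ℝ)` acting on `ℝ^{2n}` by the standard representation
(extended to the exterior algebra `Λ*(ℝ^{2n})` by derivations `θ`), the algebra of
invariants `[Λ*(ℝ^{2n})]^{sp_n(ℝ)}` equals the subalgebra generated by the symplectic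
form `ω_n = Σᵢ ∂/∂xⁱ ∧ ∂/∂yⁱ`, with basis `{1, ω_n, ω_n², ..., ω_nⁿ}`. -/
theorem sp_n_exterior_invariants
    (n : ℕ)
    (θ : Matrix (Fin n ⊕ Fin n) (Fin n ⊕ Fin n) ℝ →
      (ExteriorAlgebra ℝ ((Fin n ⊕ Fin n) → ℝ) →ₗ[ℝ]
        ExteriorAlgebra ℝ ((Fin n ⊕ Fin n) → ℝ)))
    (hθmul : ∀ (X : Matrix (Fin n ⊕ Fin n) (Fin n ⊕ Fin n) ℝ)
      (a b : ExteriorAlgebra ℝ ((Fin n ⊕ Fin n) → ℝ)),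
      θ X (a * b) = θ X a * b + a * θ X b)
    (hθι : ∀ (X : Matrix (Fin n ⊕ Fin n) (Fin n ⊕ Fin n) ℝ) (v : (Fin n ⊕ Fin n) → ℝ),
      θ X (ExteriorAlgebra.ι ℝ v) = ExteriorAlgebra.ι ℝ (X.mulVec v)) :
    (∀ a : ExteriorAlgebra ℝ ((Fin n ⊕ Fin n) → ℝ),
      (∀ X : Matrix (Fin n ⊕ Fin n) (Fin n ⊕ Fin n) ℝ,
        X ∈ LieAlgebra.Symplectic.sp (Fin n) ℝ → θ X a = 0) ↔
      a ∈ Submodule.span ℝ (Set.range fun p : Fin (n+1) =>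
        (∑ i : Fin n, ExteriorAlgebra.ι ℝ (Pi.single (Sum.inl i) 1 : (Fin n ⊕ Fin n) → ℝ)
          * ExteriorAlgebra.ι ℝ (Pi.single (Sum.inr i) 1 : (Fin n ⊕ Fin n) → ℝ)) ^ (p : ℕ)))
    ∧ LinearIndependent ℝ (fun p : Fin (n+1) =>
        (∑ i : Fin n, ExteriorAlgebra.ι ℝ (Pi.single (Sum.inl i) 1 : (Fin n ⊕ Fin n) → ℝ)
          * ExteriorAlgebra.ι ℝ (Pi.single (Sum.inr i) 1 : (Fin n ⊕ Fin n) → ℝ)) ^ (p : ℕ)) :=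
  sp_n_exterior_invariants_general (Fintype.card_fin n)
    (isUnit_iff_ne_zero.mpr (Nat.cast_ne_zero.mpr n.factorial_ne_zero)) θ
    fun X _ => ⟨hθmul X, hθι X⟩
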